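/- arXiv:1404.0464 — 4 statements merged into one kernel-verified Lean document; each statement's English description precedes it below -/
import Mathlib

section
/- For all m, n, k ∈ ℤ, the operators L_m satisfy the q-Jacobi identity of the q-deformed Virasoro–Witt algebra: [L_n,[L_m,L_k]_{(q^{m−k},q^{k−m})}]_{(q^{2n−m−k},q^{m+k−2n})} + [L_m,[L_k,L_n]_{(q^{k−n},q^{n−k})}]_{(q^{2m−k−n},q^{k+n−2m})} + [L_k,[L_n,L_m]_{(q^{n−m},q^{m−n})}]_{(q^{2k−n−m},q^{n+m−2k})} = 0 as ℂ-linear operators on V. -/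
/-- The q-number `[x] = (q^x - q^{-x})/(q - q⁻¹)`. -/
noncomputable def qnum (q : ℂ) (x : ℤ) : ℂ := (q ^ x - q ^ (-x)) / (q - q⁻¹)

/-- The operator `L_m = -q^N (a†)^{m+1} a` on `V = ℤ →₀ ℂ`,
determined by `L_m e_k = -[k] q^{k+m} e_{k+m}`. -/
noncomputable def Lop (q : ℂ) (m : ℤ) : Module.End ℂ (ℤ →₀ ℂ) :=
  Finsupp.lsum ℂ fun k : ℤ => (-(qnum q k) * q ^ (k + m)) • Finsupp.lsingle (k + m)

/-- The deformed commutator `[A,B]_{(u,v)} = u • (A∘B) - v • (B∘A)` of operators. -/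
noncomputable def dcomm (u v : ℂ) (A B : Module.End ℂ (ℤ →₀ ℂ)) : Module.End ℂ (ℤ →₀ ℂ) :=
  u • (A * B) - v • (B * A)

theorem Lop_single (q : ℂ) (m j : ℤ) (c : ℂ) :
    Lop q m (Finsupp.single j c) = Finsupp.single (j + m) (-(qnum q j) * q ^ (j + m) * c) := by
  simp [Lop]

theorem inner_eq (q : ℂ) (hq : q ≠ 0) (hq2 : q ^ 2 ≠ 1) (m k : ℤ) :
    dcomm (q ^ (m - k)) (q ^ (k - m)) (Lop q m) (Lop q k) = qnum q (m - k) • Lop q (m + k) := by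
  have hd : q - q⁻¹ ≠ 0 := by
    intro h
    apply hq2
    field_simp at h
    linear_combination h
  refine Finsupp.lhom_ext fun j c => ?_
  simp only [dcomm, LinearMap.sub_apply, LinearMap.smul_apply, Module.End.mul_apply, Lop_single,
    Finsupp.smul_single, smul_eq_mul]
  rw [show j + k + m = j + (m + k) by ring, show j + m + k = j + (m + k) by ring,
    ← Finsupp.single_sub]
  congr 1
  simp only [qnum, neg_add, neg_sub, zpow_add₀ hq, zpow_sub₀ hq, zpow_neg]
  have h1 := zpow_ne_zero m hq
  have h2 := zpow_ne_zero k hq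
  have h3 := zpow_ne_zero j hq
  generalize q - q⁻¹ = d at *
  generalize q ^ m = x at *
  generalize q ^ k = y at *
  generalize q ^ j = z at *
  field_simp
  ring

theorem dcomm_smul_right (u v c : ℂ) (A B : Module.End ℂ (ℤ →₀ ℂ)) :
    dcomm u v A (c • B) = c • dcomm u v A B := by
  simp only [dcomm, mul_smul_comm, smul_mul_assoc]
  module

/-- the q-Jacobi identity of the q-deformed Virasoro–Witt algebra. -/
theorem stmt2 (q : ℂ) (hq : q ≠ 0) (hq2 : q ^ 2 ≠ 1) (m n k : ℤ) :
    dcomm (q ^ (2 * n - m - k)) (q ^ (m + k - 2 * n)) (Lop q n)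
        (dcomm (q ^ (m - k)) (q ^ (k - m)) (Lop q m) (Lop q k))
      + dcomm (q ^ (2 * m - k - n)) (q ^ (k + n - 2 * m)) (Lop q m)
        (dcomm (q ^ (k - n)) (q ^ (n - k)) (Lop q k) (Lop q n))
      + dcomm (q ^ (2 * k - n - m)) (q ^ (n + m - 2 * k)) (Lop q k)
        (dcomm (q ^ (n - m)) (q ^ (m - n)) (Lop q n) (Lop q m)) = 0 := by
  have hd : q - q⁻¹ ≠ 0 := by
    intro h
    apply hq2
    field_simp at h
    linear_combination h
  rw [inner_eq q hq hq2, inner_eq q hq hq2, inner_eq q hq hq2]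
  simp only [dcomm_smul_right]
  refine Finsupp.lhom_ext fun j c => ?_
  simp only [dcomm, LinearMap.add_apply, LinearMap.sub_apply, LinearMap.smul_apply,
    Module.End.mul_apply, Lop_single, Finsupp.smul_single, smul_eq_mul, LinearMap.zero_apply]
  rw [show j + (m + k) + n = j + (m + n + k) by ring, show j + n + (m + k) = j + (m + n + k) by ring,
    show j + (k + n) + m = j + (m + n + k) by ring, show j + m + (k + n) = j + (m + n + k) by ring,
    show j + (n + m) + k = j + (m + n + k) by ring, show j + k + (n + m) = j + (m + n + k) by ring]
  simp only [← Finsupp.single_sub, ← Finsupp.single_add, Finsupp.smul_single, smul_eq_mul]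
  rw [Finsupp.single_eq_zero]
  simp only [qnum, neg_add, neg_sub, two_mul, zpow_add₀ hq, zpow_sub₀ hq, zpow_neg]
  have h1 := zpow_ne_zero m hq
  have h2 := zpow_ne_zero k hq
  have h3 := zpow_ne_zero j hq
  have h4 := zpow_ne_zero n hq
  generalize q - q⁻¹ = d at *
  generalize q ^ m = x at *
  generalize q ^ k = y at *
  generalize q ^ j = z at *
  generalize q ^ n = w at *
  field_simp
  ring
end

section
/- For all m, n, k ∈ ℤ, the q-3-bracket ⟦L_m,L_n,L_k⟧ := q^{2m−n−k}·L_m∘[L_n,L_k]_{(q^{n−k},q^{k−n})} + q^{2n−k−m}·L_n∘[L_k,L_m]_{(q^{k−m},q^{m−k})} + q^{2k−m−n}·L_k∘[L_m,L_n]_{(q^{m−n},q^{n−m})} satisfies ⟦L_m,L_n,L_k⟧ = (q − q^{-1})·[m−n]·[m−k]·[n−k]·L_{m+n+k} as ℂ-linear operators on V. -/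
/-- the q-3-bracket
`⟦L_m,L_n,L_k⟧ = q^{2m-n-k} L_m ∘ [L_n,L_k]_{(q^{n-k},q^{k-n})} + cyclic`
equals `(q - q⁻¹)·[m-n]·[m-k]·[n-k]·L_{m+n+k}`. -/
theorem stmt3 (q : ℂ) (hq : q ≠ 0) (hq2 : q ^ 2 ≠ 1) (m n k : ℤ) :
    q ^ (2 * m - n - k) • (Lop q m * dcomm (q ^ (n - k)) (q ^ (k - n)) (Lop q n) (Lop q k))
      + q ^ (2 * n - k - m) • (Lop q n * dcomm (q ^ (k - m)) (q ^ (m - k)) (Lop q k) (Lop q m))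
      + q ^ (2 * k - m - n) • (Lop q k * dcomm (q ^ (m - n)) (q ^ (n - m)) (Lop q m) (Lop q n))
      = ((q - q⁻¹) * qnum q (m - n) * qnum q (m - k) * qnum q (n - k)) • Lop q (m + n + k) := by
  have hl : q - q⁻¹ ≠ 0 := by
    intro h
    apply hq2
    have h1 : q = q⁻¹ := sub_eq_zero.mp h
    calc q ^ 2 = q * q := by ring
      _ = q * q⁻¹ := by rw [← h1]
      _ = 1 := mul_inv_cancel₀ hq
  refine Finsupp.lhom_ext fun j c => ?_
  have e1 : j + k + n + m = j + (m + n + k) := by ring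
  have e2 : j + n + k + m = j + (m + n + k) := by ring
  have e3 : j + m + k + n = j + (m + n + k) := by ring
  have e4 : j + k + m + n = j + (m + n + k) := by ring
  have e5 : j + n + m + k = j + (m + n + k) := by ring
  have e6 : j + m + n + k = j + (m + n + k) := by ring
  simp only [dcomm, LinearMap.add_apply, LinearMap.smul_apply, Module.End.mul_apply,
    LinearMap.sub_apply, Lop_single, map_sub, map_smul, Finsupp.smul_single, e1, e2, e3, e4, e5, e6,
    ← Finsupp.single_sub, ← Finsupp.single_add, smul_eq_mul]
  congr 1
  have hm : q ^ m ≠ 0 := zpow_ne_zero _ hq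
  have hn : q ^ n ≠ 0 := zpow_ne_zero _ hq
  have hk : q ^ k ≠ 0 := zpow_ne_zero _ hq
  have hj : q ^ j ≠ 0 := zpow_ne_zero _ hq
  have two : ∀ x : ℤ, q ^ (2 * x) = q ^ x * q ^ x := fun x => by rw [two_mul, zpow_add₀ hq]
  simp only [qnum, zpow_neg, zpow_add₀ hq, zpow_sub₀ hq, two]
  generalize q - q⁻¹ = l at *
  generalize q ^ m = x at *
  generalize q ^ n = y at *
  generalize q ^ k = z at *
  generalize q ^ j = w at *
  field_simp
  ring
end

section
/- Let q be a real number with q > 1, and define the trilinear bracket on the free ℂ-module with basis (L_i)_{i∈ℤ} by ⟦L_a,L_b,L_c⟧ = (q − q^{-1})·[a−b]·[a−c]·[b−c]·L_{a+b+c}. Then this bracket does not satisfy the fundamental identity of a Filippov 3-algebra: ⟦L_{−2},L_3,⟦L_0,L_1,L_2⟧⟧ ≠ ⟦⟦L_{−2},L_3,L_0⟧,L_1,L_2⟧ + ⟦L_0,⟦L_{−2},L_3,L_1⟧,L_2⟧ + ⟦L_0,L_1,⟦L_{−2},L_3,L_2⟧⟧; indeed the left-hand side is 0 while the right-hand side is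 a nonzero multiple of L_4. -/
/-- The q-number `[x] = (q^x - q^{-x})/(q - q⁻¹)` for real `q`. -/
noncomputable def qnumR (q : ℝ) (x : ℤ) : ℝ := (q ^ x - q ^ (-x)) / (q - q⁻¹)

/-- The structure constant `g(a,b,c) = (q - q⁻¹)·[a-b]·[a-c]·[b-c]`. -/
noncomputable def gVW (q : ℝ) (a b c : ℤ) : ℝ :=
  (q - q⁻¹) * qnumR q (a - b) * qnumR q (a - c) * qnumR q (b - c)

/-- The trilinear bracket `⟦L_a,L_b,L_c⟧ = g(a,b,c)·L_{a+b+c}` on the free ℂ-module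
`ℤ →₀ ℂ` with basis `L_i = single i 1`, extended trilinearly. -/
noncomputable def VWbr (q : ℝ) (f g h : ℤ →₀ ℂ) : ℤ →₀ ℂ :=
  f.sum fun a ca => g.sum fun b cb => h.sum fun c cc =>
    (ca * cb * cc * (gVW q a b c : ℂ)) • Finsupp.single (a + b + c) (1 : ℂ)

/-- The basis vector `L_i`. -/
noncomputable def LL (i : ℤ) : ℤ →₀ ℂ := Finsupp.single i 1

theorem VWbr_single (q : ℝ) (a b c : ℤ) (x y z : ℂ) :
    VWbr q (Finsupp.single a x) (Finsupp.single b y) (Finsupp.single c z)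
      = Finsupp.single (a + b + c) (x * y * z * (gVW q a b c : ℂ)) := by
  unfold VWbr
  rw [Finsupp.sum_single_index, Finsupp.sum_single_index, Finsupp.sum_single_index]
  · simp
  · simp
  · simp
  · simp

theorem qnumR_zero (q : ℝ) : qnumR q 0 = 0 := by simp [qnumR]

theorem qnumR_ne_zero (q : ℝ) (hq : 1 < q) (x : ℤ) (hx : x ≠ 0) : qnumR q x ≠ 0 := by
  have h0 : q⁻¹ < 1 := inv_lt_one_of_one_lt₀ hq
  unfold qnumR
  refine div_ne_zero (fun h => hx ?_) (by linarith)
  have := zpow_right_injective₀ (by linarith) (by linarith) (sub_eq_zero.mp h)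
  omega

theorem gVW_ne_zero (q : ℝ) (hq : 1 < q) (a b c : ℤ) (h1 : a ≠ b) (h2 : a ≠ c) (h3 : b ≠ c) :
    gVW q a b c ≠ 0 := by
  have h0 : q⁻¹ < 1 := inv_lt_one_of_one_lt₀ hq
  unfold gVW
  refine mul_ne_zero (mul_ne_zero (mul_ne_zero (by linarith) ?_) ?_) ?_ <;>
    exact qnumR_ne_zero q hq _ (by omega)

/-- for real `q > 1`, the q-deformed Virasoro–Witt 3-bracket fails the
fundamental identity of a Filippov 3-algebra: the left-hand side vanishes while the
right-hand side is a nonzero multiple of `L₄`. -/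
theorem stmt5 (q : ℝ) (hq : 1 < q) :
    VWbr q (LL (-2)) (LL 3) (VWbr q (LL 0) (LL 1) (LL 2))
      ≠ VWbr q (VWbr q (LL (-2)) (LL 3) (LL 0)) (LL 1) (LL 2)
        + VWbr q (LL 0) (VWbr q (LL (-2)) (LL 3) (LL 1)) (LL 2)
        + VWbr q (LL 0) (LL 1) (VWbr q (LL (-2)) (LL 3) (LL 2)) ∧
    VWbr q (LL (-2)) (LL 3) (VWbr q (LL 0) (LL 1) (LL 2)) = 0 ∧
    ∃ c : ℂ, c ≠ 0 ∧
      VWbr q (VWbr q (LL (-2)) (LL 3) (LL 0)) (LL 1) (LL 2)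
        + VWbr q (LL 0) (VWbr q (LL (-2)) (LL 3) (LL 1)) (LL 2)
        + VWbr q (LL 0) (LL 1) (VWbr q (LL (-2)) (LL 3) (LL 2)) = c • LL 4 := by
  have z1 : gVW q (-2) 3 3 = 0 := by simp [gVW, qnumR_zero]
  have z2 : gVW q 1 1 2 = 0 := by simp [gVW, qnumR_zero]
  have z3 : gVW q 0 2 2 = 0 := by simp [gVW, qnumR_zero]
  have n1 : gVW q (-2) 3 2 ≠ 0 := gVW_ne_zero q hq _ _ _ (by norm_num) (by norm_num) (by norm_num)
  have n2 : gVW q 0 1 3 ≠ 0 := gVW_ne_zero q hq _ _ _ (by norm_num) (by norm_num) (by norm_num)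
  have hL : VWbr q (LL (-2)) (LL 3) (VWbr q (LL 0) (LL 1) (LL 2)) = 0 := by
    unfold LL
    rw [VWbr_single, VWbr_single]
    norm_num [z1]
  have hR : VWbr q (VWbr q (LL (-2)) (LL 3) (LL 0)) (LL 1) (LL 2)
        + VWbr q (LL 0) (VWbr q (LL (-2)) (LL 3) (LL 1)) (LL 2)
        + VWbr q (LL 0) (LL 1) (VWbr q (LL (-2)) (LL 3) (LL 2))
        = ((gVW q (-2) 3 2 : ℂ) * (gVW q 0 1 3 : ℂ)) • LL 4 := by
    unfold LL
    simp only [VWbr_single]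
    norm_num [z2, z3]
  have hc : (gVW q (-2) 3 2 : ℂ) * (gVW q 0 1 3 : ℂ) ≠ 0 :=
    mul_ne_zero (by exact_mod_cast n1) (by exact_mod_cast n2)
  refine ⟨?_, hL, _, hc, hR⟩
  rw [hL, hR]
  refine (smul_ne_zero hc ?_).symm
  simp [LL]
end

section
/- Let p be a real number with p > 1 and let n ≥ 3 be odd. With the indices k_l = (l,1) ∈ ℤ² for l = 1,…,2n−1, the fully antisymmetrized sh-Jacobi sum of the n-algebra of the operators T does not vanish: Σ_{σ∈S_{2n−1}} sgn(σ)·[[T_{k_{σ(1)}},…,T_{k_{σ(n)}}], T_{k_{σ(n+1)}},…,T_{k_{σ(2n−1)}}] ≠ 0; hence for odd n this n-algebra is not a sh-n-Lie algebra. -/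
/-- The wedge `m∧n = m₁n₂ - m₂n₁` on ℤ². -/
def wedge (m n : ℤ × ℤ) : ℤ := m.1 * n.2 - m.2 * n.1

/-- The operator `T_n` on `V = (ℤ×ℤ) →₀ ℂ` determined by `T_n e_k = p^{k∧n}·e_{k+n}`. -/
noncomputable def Twop (p : ℝ) (n : ℤ × ℤ) : Module.End ℂ ((ℤ × ℤ) →₀ ℂ) :=
  Finsupp.lsum ℂ fun k : ℤ × ℤ => ((p : ℂ) ^ wedge k n) • Finsupp.lsingle (k + n)

/-- The recursively defined n-bracket in an associative ring (with fuel parameter):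
`[A₁] = A₁` and `[A₁,…,A_n] = Σ_{s=1}^{n} (-1)^{s+1} A_s·[A₁,…,Â_s,…,A_n]`. -/
noncomputable def nbrAux {R : Type*} [Ring R] : ℕ → List R → R
  | 0, _ => 0
  | _ + 1, [] => 0
  | _ + 1, [a] => a
  | fuel + 1, l => ∑ s ∈ Finset.range l.length,
      (-1 : R) ^ s * (l.getD s 0 * nbrAux fuel (l.eraseIdx s))

/-- The n-bracket `[A₁,…,A_n]`. -/
noncomputable def nbr {R : Type*} [Ring R] (l : List R) : R := nbrAux l.length l

/-- signed word sum -/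
noncomputable def PhiW {R S ι : Type*} [Ring R] [Fintype S] (c : S → ℤ) (F : S → ι → R)
    (w : List ι) : R := ∑ σ, c σ • (w.map (F σ)).prod

theorem phi_move {R S ι : Type*} [Ring R] [Fintype S] (c : S → ℤ) (F : S → ι → R) (w0 : List ι)
    (H : ∀ u a b v, (u ++ a :: b :: v).Perm w0 →
      PhiW c F (u ++ a :: b :: v) = - PhiW c F (u ++ b :: a :: v))
    (x : List ι) : ∀ (u : List ι) (a : ι) (v : List ι), (u ++ (x ++ a :: v)).Perm w0 →
      PhiW c F (u ++ (x ++ a :: v)) = (-1 : ℤ) ^ x.length • PhiW c F (u ++ a :: (x ++ v)) := by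
  induction x with
  | nil => intro u a v _; simp
  | cons y x ih =>
    intro u a v h
    have h1 := ih (u ++ [y]) a v (by simpa using h)
    have e : u ++ (y :: x ++ a :: v) = u ++ [y] ++ (x ++ a :: v) := by simp
    rw [e, h1]
    have e2 : u ++ [y] ++ a :: (x ++ v) = u ++ y :: a :: (x ++ v) := by simp
    rw [e2, H]
    · simp [pow_succ]
    · refine List.Perm.trans ?_ h
      refine List.Perm.append_left u ?_
      simp only [List.cons_append]
      exact List.Perm.cons _ List.perm_middle.symm

theorem nbr_rec {R : Type*} [Ring R] (l : List R) (h : 2 ≤ l.length) :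
    nbr l = ∑ s ∈ Finset.range l.length,
      (-1 : R) ^ s * (l.getD s 0 * nbr (l.eraseIdx s)) := by
  match l, h with
  | a :: b :: t, _ =>
    unfold nbr
    have : (a :: b :: t).length = (b :: t).length + 1 := rfl
    rw [this, nbrAux]
    · refine Finset.sum_congr rfl fun s hs => ?_
      rw [List.length_eraseIdx_of_lt (by simpa using hs)]
      rfl
    · simp
    · simp

theorem nbr_expand {R S ι : Type*} [Ring R] [Fintype S] (c : S → ℤ) (F : S → ι → R) (w0 : List ι)
    (H : ∀ u a b v, (u ++ a :: b :: v).Perm w0 →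
      PhiW c F (u ++ a :: b :: v) = - PhiW c F (u ++ b :: a :: v))
    (m : ℕ) : ∀ (u l v : List ι), l.length = m + 1 → (u ++ (l ++ v)).Perm w0 →
      ∑ σ, c σ • ((u.map (F σ)).prod * (nbr (l.map (F σ)) * (v.map (F σ)).prod))
        = ((m + 1).factorial : ℤ) • PhiW c F (u ++ (l ++ v)) := by
  induction m with
  | zero =>
    intro u l v hl _
    obtain ⟨a, rfl⟩ := List.length_eq_one_iff.mp (by simpa using hl)
    simp [PhiW, nbr, nbrAux]
  | succ m ih =>
    intro u l v hl hp
    have key : ∀ s ∈ Finset.range (m + 2), ∑ σ, c σ • ((u.map (F σ)).prod *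
        (((-1 : R) ^ s * ((l.map (F σ)).getD s 0 * nbr ((l.map (F σ)).eraseIdx s))) *
          (v.map (F σ)).prod)) = ((m + 1).factorial : ℤ) • PhiW c F (u ++ (l ++ v)) := by
      intro s hs
      have hs' : s < l.length := by rw [hl]; exact Finset.mem_range.mp hs
      have hdec : l = l.take s ++ l[s] :: l.drop (s + 1) := by simp
      have her : l.eraseIdx s = l.take s ++ l.drop (s + 1) := List.eraseIdx_eq_take_drop_succ _ _
      have hperm : (u ++ [l[s]] ++ (l.eraseIdx s ++ v)).Perm w0 := by
        refine List.Perm.trans ?_ hp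
        rw [her]
        have h5 := congrArg (fun t => u ++ (t ++ v)) hdec
        rw [h5]
        simp only [List.append_assoc, List.cons_append, List.nil_append]
        refine List.Perm.append_left u ?_
        exact List.perm_middle.symm
      have h1 := ih (u ++ [l[s]]) (l.eraseIdx s) v
        (by rw [List.length_eraseIdx_of_lt hs', hl]; rfl) hperm
      have h2 := phi_move c F w0 H (l.take s) u l[s] (l.drop (s + 1) ++ v) (by
        have : u ++ (l.take s ++ l[s] :: (l.drop (s + 1) ++ v)) = u ++ (l ++ v) := by
          have h5 := congrArg (fun t => u ++ (t ++ v)) hdec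
          simp only [List.append_assoc, List.cons_append] at h5
          exact h5.symm
        rw [this]; exact hp)
      have e1 : u ++ (l.take s ++ l[s] :: (l.drop (s + 1) ++ v)) = u ++ (l ++ v) := by
        have h5 := congrArg (fun t => u ++ (t ++ v)) hdec
        simp only [List.append_assoc, List.cons_append] at h5
        exact h5.symm
      have e2 : u ++ [l[s]] ++ (l.eraseIdx s ++ v)
          = u ++ l[s] :: (l.take s ++ (l.drop (s + 1) ++ v)) := by
        rw [her]; simp
      rw [e1, List.length_take, min_eq_left hs'.le] at h2
      rw [e2] at h1
      rw [h2, smul_comm, ← h1, Finset.smul_sum]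
      refine Finset.sum_congr rfl fun σ _ => ?_
      rw [smul_comm]
      congr 1
      rw [List.getD_eq_getElem _ _ (by simpa using hs'), ← List.eraseIdx_map]
      rcases Nat.even_or_odd s with h | h <;> simp [h.neg_one_pow, mul_assoc]
    have : ∀ σ, nbr (l.map (F σ)) = ∑ s ∈ Finset.range (m + 2),
      (-1 : R) ^ s * ((l.map (F σ)).getD s 0 * nbr ((l.map (F σ)).eraseIdx s)) := by
      intro σ
      rw [nbr_rec _ (by simp [hl])]
      simp [hl]
    simp_rw [this, Finset.sum_mul, Finset.mul_sum, Finset.smul_sum]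
    rw [Finset.sum_comm, Finset.sum_congr rfl key]
    rw [Finset.sum_const, Finset.card_range, Nat.factorial_succ (m + 1)]
    push_cast
    rw [mul_smul, ← natCast_zsmul]
    push_cast
    rfl

theorem map_swap_self {α : Type*} [DecidableEq α] (a b : α) (u : List α) (ha : a ∉ u)
    (hb : b ∉ u) : u.map (Equiv.swap a b) = u := by
  conv_rhs => rw [← List.map_id u]
  refine List.map_congr_left fun x hx => ?_
  exact Equiv.swap_apply_of_ne_of_ne (fun h => ha (h ▸ hx)) (fun h => hb (h ▸ hx))

theorem phi_swap_gen {R ι α : Type*} [Ring R] [Fintype α] [DecidableEq α]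
    (F : Equiv.Perm α → ι → R) (x y : α) (hxy : x ≠ y) (f : ι → ι) (w w' : List ι)
    (hw : w.map f = w')
    (hF : ∀ σ, ∀ i ∈ w, F (σ * Equiv.swap x y) i = F σ (f i)) :
    PhiW (fun σ => (Equiv.Perm.sign σ : ℤ)) F w
      = - PhiW (fun σ => (Equiv.Perm.sign σ : ℤ)) F w' := by
  unfold PhiW
  rw [← Equiv.sum_comp (Equiv.mulRight (Equiv.swap x y)), ← Finset.sum_neg_distrib]
  refine Finset.sum_congr rfl fun σ _ => ?_
  simp only [Equiv.coe_mulRight, Equiv.Perm.sign_mul, Equiv.Perm.sign_swap hxy]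
  rw [← hw, List.map_map, List.map_congr_left (hF σ)]
  simp [Function.comp_def]

theorem phi_swap {R α : Type*} [Ring R] [Fintype α] [DecidableEq α] (A : α → R)
    (w0 : List α) (hnd : w0.Nodup) (u : List α) (a b : α) (v : List α)
    (h : (u ++ a :: b :: v).Perm w0) :
    PhiW (fun σ : Equiv.Perm α => (Equiv.Perm.sign σ : ℤ)) (fun σ i => A (σ i)) (u ++ a :: b :: v)
      = - PhiW (fun σ : Equiv.Perm α => (Equiv.Perm.sign σ : ℤ)) (fun σ i => A (σ i))
        (u ++ b :: a :: v) := by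
  have hn := h.nodup_iff.mpr hnd
  have hn2 := List.perm_middle.nodup_iff.mp hn
  have hn3 : (b :: a :: (u ++ v)).Nodup := by
    refine (List.Perm.nodup_iff ?_).mp hn2
    exact (List.Perm.cons a List.perm_middle).trans (List.Perm.swap _ _ _)
  simp only [List.nodup_cons, List.mem_cons, List.mem_append, not_or] at hn3
  obtain ⟨⟨hba, hbu, hbv⟩, ⟨hau, hav⟩, _⟩ := hn3
  refine phi_swap_gen _ a b (Ne.symm hba) (Equiv.swap a b) _ _ ?_ ?_
  · simp [map_swap_self, *]
  · intro σ i _; rfl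

theorem phi_swap_opt {R α : Type*} [Ring R] [Fintype α] [DecidableEq α] (A : α → R)
    (bl c : List α) (hnd : (bl ++ c).Nodup) (hodd : Odd bl.length)
    (u : List (Option α)) (a b : Option α) (v : List (Option α))
    (h : (u ++ a :: b :: v).Perm (none :: c.map some)) :
    PhiW (fun σ : Equiv.Perm α => (Equiv.Perm.sign σ : ℤ))
      (fun σ i => i.elim (nbr (bl.map fun i => A (σ i))) (fun i => A (σ i))) (u ++ a :: b :: v)
      = - PhiW (fun σ : Equiv.Perm α => (Equiv.Perm.sign σ : ℤ))
      (fun σ i => i.elim (nbr (bl.map fun i => A (σ i))) (fun i => A (σ i)))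
        (u ++ b :: a :: v) := by
  have hnc : (none :: c.map some).Nodup := by
    refine List.nodup_cons.mpr ⟨by simp, ?_⟩
    exact (List.nodup_append.mp hnd).2.1.map (Option.some_injective _)
  have hdis : ∀ x ∈ bl, ∀ y ∈ c, x ≠ y := (List.nodup_append.mp hnd).2.2
  have hn3 : (b :: a :: (u ++ v)).Nodup := by
    refine (List.Perm.nodup_iff ?_).mpr hnc
    refine List.Perm.trans ?_ h
    refine List.Perm.symm ?_
    refine List.perm_middle.trans ?_
    exact (List.Perm.cons a List.perm_middle).trans (List.Perm.swap _ _ _)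
  simp only [List.nodup_cons, List.mem_cons, List.mem_append, not_or] at hn3
  obtain ⟨⟨hba, hbu, hbv⟩, ⟨hau, hav⟩, _⟩ := hn3
  have hsome : ∀ l : List (Option α), none ∉ l → ∃ l' : List α, l = l'.map some := by
    intro l
    induction l with
    | nil => intro _; exact ⟨[], rfl⟩
    | cons x l ih =>
      intro hx
      simp only [List.mem_cons, not_or] at hx
      obtain ⟨l', rfl⟩ := ih hx.2
      obtain ⟨y, rfl⟩ := Option.ne_none_iff_exists'.mp (Ne.symm hx.1)
      exact ⟨y :: l', rfl⟩
  have hexp : ∀ u' v' : List α, (u' ++ v').Perm c →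
      PhiW (fun σ : Equiv.Perm α => (Equiv.Perm.sign σ : ℤ))
      (fun σ i => i.elim (nbr (bl.map fun i => A (σ i))) (fun i => A (σ i)))
        (u'.map some ++ none :: v'.map some)
      = (bl.length.factorial : ℤ) • PhiW (fun σ : Equiv.Perm α => (Equiv.Perm.sign σ : ℤ))
        (fun σ i => A (σ i)) (u' ++ (bl ++ v')) := by
    intro u' v' huv
    obtain ⟨m, hm⟩ : ∃ m, bl.length = m + 1 := ⟨bl.length - 1, by have := hodd.pos; omega⟩
    have := nbr_expand (fun σ : Equiv.Perm α => (Equiv.Perm.sign σ : ℤ))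
      (fun σ i => A (σ i)) (bl ++ c) (phi_swap A (bl ++ c) hnd) m u' bl v' hm (by
        refine List.Perm.trans ?_ (List.Perm.append_left bl huv)
        simp only [← List.append_assoc]
        exact List.Perm.append_right _ List.perm_append_comm)
    rw [hm, ← this]
    unfold PhiW
    refine Finset.sum_congr rfl fun σ _ => ?_
    simp [Function.comp_def]
  have hblock : ∀ (u' v' : List α) (y : α), (u' ++ y :: v').Perm c →
      PhiW (fun σ : Equiv.Perm α => (Equiv.Perm.sign σ : ℤ))
      (fun σ i => i.elim (nbr (bl.map fun i => A (σ i))) (fun i => A (σ i)))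
        (u'.map some ++ none :: some y :: v'.map some)
      = - PhiW (fun σ : Equiv.Perm α => (Equiv.Perm.sign σ : ℤ))
      (fun σ i => i.elim (nbr (bl.map fun i => A (σ i))) (fun i => A (σ i)))
        (u'.map some ++ some y :: none :: v'.map some) := by
    intro u' v' y hp
    have h1 := hexp u' (y :: v') hp
    have h2 := hexp (u' ++ [y]) v' (by simpa using hp)
    simp only [List.map_append, List.map_cons, List.map_nil, List.append_assoc,
      List.singleton_append] at h1 h2
    rw [h1, h2, phi_move _ _ (bl ++ c) (phi_swap A (bl ++ c) hnd) bl u' y v' (by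
        refine List.Perm.trans ?_ (List.Perm.append_left bl hp)
        simp only [← List.append_assoc]
        exact List.Perm.append_right _ List.perm_append_comm), hodd.neg_one_pow]
    simp
  match a, b with
  | none, none => exact absurd rfl hba
  | none, some y =>
    obtain ⟨u', rfl⟩ := hsome u hau
    obtain ⟨v', rfl⟩ := hsome v hav
    refine hblock u' v' y ?_
    have := (List.perm_middle.symm.trans h).cons_inv
    have h3 : ((u' ++ y :: v').map some).Perm (c.map some) := by simpa using this
    exact (List.map_perm_map_iff (Option.some_injective _)).mp h3
  | some y, none =>
    obtain ⟨u', rfl⟩ := hsome u hbu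
    obtain ⟨v', rfl⟩ := hsome v hbv
    rw [hblock u' v' y, neg_neg]
    have h4 : (none :: (u'.map some ++ some y :: v'.map some)).Perm (none :: c.map some) := by
      refine List.Perm.trans ?_ h
      have := (List.perm_middle (a := (none : Option α)) (l₁ := u'.map some ++ [some y])
        (l₂ := v'.map some)).symm
      simpa using this
    have h3 : ((u' ++ y :: v').map some).Perm (c.map some) := by simpa using h4.cons_inv
    exact (List.map_perm_map_iff (Option.some_injective _)).mp h3
  | some x, some y =>
    have hx : x ∈ c := by
      have : some x ∈ none :: c.map some := h.subset (by simp)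
      simpa using this
    have hy : y ∈ c := by
      have : some y ∈ none :: c.map some := h.subset (by simp)
      simpa using this
    have hxy : x ≠ y := fun e => hba (by rw [e])
    have hfix : ∀ l : List (Option α), some x ∉ l → some y ∉ l →
        l.map (Option.map (Equiv.swap x y)) = l := by
      intro l h1 h2
      conv_rhs => rw [← List.map_id l]
      refine List.map_congr_left fun z hz => ?_
      cases z with
      | none => rfl
      | some z =>
        simp only [Option.map_some, id]
        rw [Equiv.swap_apply_of_ne_of_ne (fun e => h1 (by rw [← e]; exact hz))
          (fun e => h2 (by rw [← e]; exact hz))]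
    refine phi_swap_gen _ x y hxy (Option.map (Equiv.swap x y)) _ _ ?_ ?_
    · rw [List.map_append, List.map_cons, List.map_cons, hfix u hau hbu, hfix v hav hbv]
      simp
    · intro σ i _
      cases i with
      | some z => rfl
      | none =>
        simp only [Option.elim_none, Option.map_none]
        congr 1
        refine List.map_congr_left fun z hz => ?_
        rw [Equiv.Perm.mul_apply, Equiv.swap_apply_of_ne_of_ne (hdis z hz x hx) (hdis z hz y hy)]

theorem sh_sum {R α : Type*} [Ring R] [Fintype α] [DecidableEq α] (A : α → R)
    (bl c : List α) (hnd : (bl ++ c).Nodup) (hodd : Odd bl.length) :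
    ∑ σ : Equiv.Perm α, (Equiv.Perm.sign σ : ℤ) •
      nbr (nbr (bl.map fun i => A (σ i)) :: c.map fun i => A (σ i))
    = ((c.length + 1).factorial : ℤ) • ((bl.length.factorial : ℤ) •
      PhiW (fun σ : Equiv.Perm α => (Equiv.Perm.sign σ : ℤ)) (fun σ i => A (σ i)) (bl ++ c)) := by
  have h1 := nbr_expand (fun σ : Equiv.Perm α => (Equiv.Perm.sign σ : ℤ))
    (fun σ (i : Option α) => i.elim (nbr (bl.map fun i => A (σ i))) (fun i => A (σ i)))
    (none :: c.map some) (phi_swap_opt A bl c hnd hodd) c.length [] (none :: c.map some) []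
    (by simp) (by simp)
  obtain ⟨m, hm⟩ : ∃ m, bl.length = m + 1 := ⟨bl.length - 1, by have := hodd.pos; omega⟩
  have h2 := nbr_expand (fun σ : Equiv.Perm α => (Equiv.Perm.sign σ : ℤ))
      (fun σ i => A (σ i)) (bl ++ c) (phi_swap A (bl ++ c) hnd) m [] bl c hm (by simp)
  rw [← hm] at h2
  simp only [List.nil_append] at h2
  rw [← h2]
  simp only [List.map_nil, List.prod_nil, one_mul, mul_one, List.append_nil, List.map_cons,
    List.map_map, Option.elim_none, List.nil_append, PhiW, List.prod_cons] at h1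
  simpa [Function.comp_def] using h1

theorem Twop_single (p : ℝ) (n k : ℤ × ℤ) (z : ℂ) :
    Twop p n (Finsupp.single k z) = Finsupp.single (k + n) ((p : ℂ) ^ wedge k n * z) := by
  simp [Twop]

theorem Twop_word (p : ℝ) (hp : 1 < p) (m : ℕ) : ∀ x : Fin m → ℤ,
    (List.ofFn fun i => Twop p (x i, 1)).prod (Finsupp.single 0 1)
      = Finsupp.single (∑ i, x i, (m : ℤ))
        (∏ i : Fin m, ((p : ℂ) ^ (2 * (i : ℤ) - (m - 1))) ^ x i) := by
  have hp0 : (p : ℂ) ≠ 0 := by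
    have : p ≠ 0 := by positivity
    exact_mod_cast this
  induction m with
  | zero => intro x; simp; rfl
  | succ m ih =>
    intro x
    rw [List.ofFn_succ, List.prod_cons, Module.End.mul_apply, ih, Twop_single,
      Fin.sum_univ_succ, Fin.prod_univ_succ]
    congr 1
    · ext <;> simp [add_comm]
    · have e : wedge (∑ i : Fin m, x i.succ, (m : ℤ)) (x 0, 1)
          = (-(m : ℤ)) * x 0 + ∑ i : Fin m, x i.succ := by
        simp [wedge]; ring
      rw [e, zpow_add₀ hp0, mul_assoc, zpow_mul]
      congr 1
      · simp
      · have : (p : ℂ) ^ (∑ i : Fin m, x i.succ) = ∏ i : Fin m, (p : ℂ) ^ x i.succ := by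
          generalize (Finset.univ : Finset (Fin m)) = s
          induction s using Finset.induction_on with
          | empty => simp
          | insert a s ha ih2 => rw [Finset.sum_insert ha, Finset.prod_insert ha,
              zpow_add₀ hp0, ih2]
        rw [this, ← Finset.prod_mul_distrib]
        refine Finset.prod_congr rfl fun i _ => ?_
        rw [← zpow_mul, ← zpow_mul, ← zpow_add₀ hp0]
        congr 1
        push_cast [Fin.val_succ]
        ring

theorem phi_ne_zero (p : ℝ) (hp : 1 < p) (N : ℕ) :
    PhiW (fun σ : Equiv.Perm (Fin N) => (Equiv.Perm.sign σ : ℤ))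
      (fun σ i => Twop p (((σ i : ℕ) : ℤ) + 1, 1)) (List.ofFn id) ≠ 0 := by
  intro h0
  have hp0 : (p : ℂ) ≠ 0 := by
    have : p ≠ 0 := by positivity
    exact_mod_cast this
  set y : Fin N → ℂ := fun i => (p : ℂ) ^ (2 * (i : ℤ) - (N - 1)) with hy
  have hinj : Function.Injective y := by
    intro i j hij
    have h1 : p ^ (2 * (i : ℤ) - (N - 1)) = p ^ (2 * (j : ℤ) - (N - 1)) := by
      have := hij
      simp only [hy] at this
      exact_mod_cast this
    have := zpow_right_injective₀ (by positivity) hp.ne' h1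
    ext
    have h2 : 2 * (i : ℤ) - (N - 1) = 2 * (j : ℤ) - (N - 1) := this
    omega
  have hdet : ∑ σ : Equiv.Perm (Fin N), ((Equiv.Perm.sign σ : ℤ) : ℂ) *
      ∏ i, y i ^ (((σ i : ℕ) : ℤ) + 1) = (∏ i, y i) * (Matrix.vandermonde y).det := by
    rw [← Matrix.det_transpose, Matrix.det_apply', Finset.mul_sum]
    refine Finset.sum_congr rfl fun σ _ => ?_
    rw [mul_left_comm, ← Finset.prod_mul_distrib]
    congr 1
    refine Finset.prod_congr rfl fun i _ => ?_
    rw [Matrix.transpose_apply, Matrix.vandermonde_apply]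
    have hyi : y i ≠ 0 := zpow_ne_zero _ hp0
    rw [zpow_add₀ hyi, zpow_natCast, zpow_one, mul_comm]
  have hne : (∏ i, y i) * (Matrix.vandermonde y).det ≠ 0 :=
    mul_ne_zero (Finset.prod_ne_zero_iff.mpr fun i _ => zpow_ne_zero _ hp0)
      (Matrix.det_vandermonde_ne_zero_iff.mpr hinj)
  apply hne
  rw [← hdet]
  have h1 := congrArg (fun f : Module.End ℂ ((ℤ × ℤ) →₀ ℂ) =>
    f (Finsupp.single 0 1) (∑ i : Fin N, (((i : ℕ) : ℤ) + 1), (N : ℤ))) h0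
  simp only [PhiW, LinearMap.zero_apply, Finsupp.zero_apply, LinearMap.sum_apply,
    Finsupp.finsetSum_apply] at h1
  rw [← h1]
  refine Finset.sum_congr rfl fun σ _ => ?_
  have h2 := Twop_word p hp N (fun i => ((σ i : ℕ) : ℤ) + 1)
  rw [Equiv.sum_comp σ (fun i : Fin N => ((i : ℕ) : ℤ) + 1)] at h2
  rw [List.map_ofFn]
  have e3 : ((fun i => Twop p (((σ i : ℕ) : ℤ) + 1, 1)) ∘ id)
      = fun i : Fin N => Twop p (((σ i : ℕ) : ℤ) + 1, 1) := rfl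
  rw [e3, LinearMap.smul_apply, h2, Finsupp.smul_apply, Finsupp.single_eq_same, zsmul_eq_mul]

theorem zsmul_fact_ne {M : Type*} [Ring M] [Module ℂ M] (k : ℕ) (x : M) (hx : x ≠ 0) :
    ((k.factorial : ℕ) : ℤ) • x ≠ 0 := by
  rw [← Int.cast_smul_eq_zsmul ℂ]
  refine smul_ne_zero ?_ hx
  exact_mod_cast k.factorial_ne_zero

/-- for real `p > 1` and odd `n ≥ 3`, with indices `k_l = (l,1)`,
the fully antisymmetrized sh-Jacobi sum of the n-algebra of the operators `T` does
not vanish; hence for odd `n` this n-algebra is not a sh-n-Lie algebra. -/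
theorem stmt15 (p : ℝ) (hp : 1 < p) (n : ℕ) (hn : 3 ≤ n) (hodd : Odd n) :
    ∑ σ : Equiv.Perm (Fin (2 * n - 1)), (Equiv.Perm.sign σ : ℤ) •
      nbr ((nbr (List.ofFn fun j : Fin n =>
          Twop p ((((σ (Fin.castLE (by omega) j) : Fin (2 * n - 1)) : ℕ) + 1 : ℤ), 1))) ::
        (List.ofFn fun j : Fin (n - 1) =>
          Twop p ((((σ ⟨n + (j : ℕ), by have := j.isLt; omega⟩ : Fin (2 * n - 1)) : ℕ) + 1 :
            ℤ), 1))) ≠ 0 := by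
  have hlt : ∀ j : Fin (n - 1), n + (j : ℕ) < 2 * n - 1 := fun j => by
    have := j.isLt; omega
  have hle : n ≤ 2 * n - 1 := by omega
  have happ : (List.ofFn fun j : Fin n => Fin.castLE hle j) ++
      (List.ofFn fun j : Fin (n - 1) => (⟨n + (j : ℕ), hlt j⟩ : Fin (2 * n - 1)))
      = List.ofFn id := by
    refine List.ext_getElem (by simp; omega) fun i h1 h2 => ?_
    simp only [List.getElem_append, List.length_ofFn, List.getElem_ofFn, id]
    split_ifs with h
    · rfl
    · ext; simp; omega
  have hs := sh_sum (fun i : Fin (2 * n - 1) => Twop p (((i : ℕ) : ℤ) + 1, 1))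
    (List.ofFn fun j : Fin n => Fin.castLE hle j)
    (List.ofFn fun j : Fin (n - 1) => (⟨n + (j : ℕ), hlt j⟩ : Fin (2 * n - 1)))
    (by rw [happ]; exact List.nodup_ofFn.mpr Function.injective_id) (by simpa using hodd)
  rw [happ] at hs
  simp only [List.map_ofFn, Function.comp_def] at hs
  rw [hs]
  have h1 := phi_ne_zero p hp (2 * n - 1)
  exact zsmul_fact_ne _ _ (zsmul_fact_ne _ _ h1)
end
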